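/- arXiv:1511.04538 — 2 statements merged into one kernel-verified Lean document; each statement's English description precedes it below -/
import Mathlib

section
/- Let q := |det A| ≥ 2 and let 𝔇 be a digit set for B. Then there exists a subset 𝔇₀ ⊆ (ℤ/Nℤ)² of cardinality q such that the map (α, k) ↦ α + Āk from 𝔇₀ × 𝔇 to (ℤ/Nℤ)² is a bijection; consequently the family {T_{Āk} e_α : α ∈ 𝔇₀, k ∈ 𝔇} coincides with the standard orthonormal basis {e_m : m ∈ (ℤ/Nℤ)²} of ℓ²(ℤ_N²), where e_j(n) = 1 if n = j and 0 otherwise. -/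
/-- The map on `(ℤ/Nℤ)²` induced by matrix–vector multiplication (mod `N`)
by an integer matrix `M`. -/
def matBar (N : ℕ) (M : Matrix (Fin 2) (Fin 2) ℤ) :
    (Fin 2 → ZMod N) → (Fin 2 → ZMod N) :=
  fun v => (M.map (Int.cast : ℤ → ZMod N)).mulVec v

/-- `D` is a set of coset representatives for `B̄((ℤ/Nℤ)²)` in `(ℤ/Nℤ)²`
containing `0`: it contains exactly one representative of each coset. -/
def IsDigitRep (N : ℕ) (B : Matrix (Fin 2) (Fin 2) ℤ)
    (D : Finset (Fin 2 → ZMod N)) : Prop :=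
  (0 : Fin 2 → ZMod N) ∈ D ∧
    ∀ v : Fin 2 → ZMod N, ∃! d, d ∈ D ∧ v - d ∈ Set.range (matBar N B)

/-- The translation operator `T_k` on `ℓ²(ℤ_N²)`: `(T_k f)(m) = f(m − k)`. -/
def transl (N : ℕ) (k : Fin 2 → ZMod N) (f : (Fin 2 → ZMod N) → ℂ) :
    (Fin 2 → ZMod N) → ℂ :=
  fun m => f (m - k)

/-- The standard basis vector `e_j ∈ ℓ²(ℤ_N²)`: `e_j(n) = 1` if `n = j`, else `0`. -/
noncomputable def stdVec (N : ℕ) (j : Fin 2 → ZMod N) : (Fin 2 → ZMod N) → ℂ :=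
  fun n => if n = j then 1 else 0

/-- The index in `ℤⁿ` of the lattice spanned by the columns of a nonsingular integer matrix is the
absolute value of its determinant. -/
theorem Matrix.index_range_mulVecLin {n : Type*} [Fintype n] [DecidableEq n] (A : Matrix n n ℤ)
    (hA : A.det ≠ 0) : (LinearMap.range A.mulVecLin).toAddSubgroup.index = A.det.natAbs := by
  have hinj : Function.Injective A.mulVecLin := Matrix.mulVec_injective_of_det_ne_zero hA
  have key := Submodule.natAbs_det_equiv (LinearMap.range A.mulVecLin)
    (LinearEquiv.ofInjective A.mulVecLin hinj)
  have hcomp : (LinearMap.range A.mulVecLin).subtype ∘ₗ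
      AddMonoidHom.toIntLinearMap (LinearEquiv.ofInjective A.mulVecLin hinj : (n → ℤ) →+ _) =
      Matrix.toLin' A := by
    ext; rfl
  rw [hcomp, LinearMap.det_toLin'] at key
  exact key.symm

/-- Reducing an integer vector modulo `N` intertwines `M` and `matBar N M`. -/
theorem matBar_intCast (N : ℕ) (M : Matrix (Fin 2) (Fin 2) ℤ) (v : Fin 2 → ℤ) :
    matBar N M (fun i => (v i : ZMod N)) = fun i => ((M.mulVec v i : ℤ) : ZMod N) := by
  ext i
  simp [matBar, Matrix.mulVec, dotProduct]

/-- The map `matBar N M` as an additive homomorphism. -/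
def matBarHom (N : ℕ) (M : Matrix (Fin 2) (Fin 2) ℤ) :
    (Fin 2 → ZMod N) →+ (Fin 2 → ZMod N) :=
  (M.map (Int.cast : ℤ → ZMod N)).mulVecLin.toAddMonoidHom

theorem matBarHom_apply (N : ℕ) (M : Matrix (Fin 2) (Fin 2) ℤ) (v : Fin 2 → ZMod N) :
    matBarHom N M v = matBar N M v := rfl

theorem intCast_comp_surjective (N : ℕ) :
    Function.Surjective (fun (v : Fin 2 → ℤ) (i : Fin 2) => (v i : ZMod N)) :=
  ZMod.intCast_surjective.comp_left

theorem matBar_matBar_eq_zero {N : ℕ} {A B : Matrix (Fin 2) (Fin 2) ℤ}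
    (hB : A * B = (N : ℤ) • (1 : Matrix (Fin 2) (Fin 2) ℤ)) (w : Fin 2 → ZMod N) :
    matBar N A (matBar N B w) = 0 := by
  obtain ⟨v, rfl⟩ := intCast_comp_surjective N w
  simp only [matBar_intCast, Matrix.mulVec_mulVec, hB]
  ext i
  simp

/-- If `A` divides the scalar matrix `N`, the image of `A` on `(ℤ/Nℤ)²` has index `|det A|`. -/
theorem index_range_matBarHom {N : ℕ} {A B : Matrix (Fin 2) (Fin 2) ℤ} (hA : A.det ≠ 0)
    (hB : A * B = (N : ℤ) • (1 : Matrix (Fin 2) (Fin 2) ℤ)) :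
    (matBarHom N A).range.index = A.det.natAbs := by
  let red : (Fin 2 → ℤ) →+ (Fin 2 → ZMod N) := (Int.castAddHom (ZMod N)).compLeft (Fin 2)
  have hred : Function.Surjective red := intCast_comp_surjective N
  rw [← AddSubgroup.index_comap_of_surjective _ hred, ← A.index_range_mulVecLin hA]
  congr 1
  ext v
  simp only [AddSubgroup.mem_comap, AddMonoidHom.mem_range, Submodule.mem_toAddSubgroup,
    LinearMap.mem_range, Matrix.mulVecLin_apply, matBarHom_apply]
  constructor
  · rintro ⟨x, hx⟩
    obtain ⟨u, rfl⟩ := intCast_comp_surjective N x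
    rw [matBar_intCast] at hx
    have hdvd : ∀ i, ∃ c : ℤ, v i - A.mulVec u i = N * c := fun i =>
      (ZMod.intCast_eq_intCast_iff_dvd_sub _ _ _).mp (congrFun hx i)
    choose c hc using hdvd
    refine ⟨u + B.mulVec c, ?_⟩
    rw [Matrix.mulVec_add, Matrix.mulVec_mulVec, hB]
    ext i
    have := hc i
    simp only [Pi.add_apply, Matrix.smul_mulVec, Matrix.one_mulVec, Pi.smul_apply, smul_eq_mul]
    linarith
  · rintro ⟨u, rfl⟩
    exact ⟨red u, matBar_intCast N A u⟩

/-- A digit set for `B` is mapped by `matBar N A` onto the whole image of `matBar N A`. -/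
theorem IsDigitRep.exists_matBar_eq {N : ℕ} {A B : Matrix (Fin 2) (Fin 2) ℤ}
    (hB : A * B = (N : ℤ) • (1 : Matrix (Fin 2) (Fin 2) ℤ))
    {D : Finset (Fin 2 → ZMod N)} (hD : IsDigitRep N B D) (v : Fin 2 → ZMod N) :
    ∃ d ∈ D, matBar N A d = matBar N A v := by
  obtain ⟨d, ⟨hd, w, hw⟩, -⟩ := hD.2 v
  refine ⟨d, hd, ?_⟩
  have h := matBar_matBar_eq_zero hB w
  rw [hw, ← matBarHom_apply, map_sub, sub_eq_zero] at h
  exact h.symm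

theorem transl_stdVec (N : ℕ) (k α : Fin 2 → ZMod N) :
    transl N k (stdVec N α) = stdVec N (α + k) := by
  ext m
  simp [transl, stdVec, sub_eq_iff_eq_add]

/-- Let `q = |det A| ≥ 2` and let `𝔇` be a digit set for `B`.  Then there is a
subset `𝔇₀ ⊆ (ℤ/Nℤ)²` with `|𝔇₀| = q` such that `(α, k) ↦ α + Āk` is a bijection
from `𝔇₀ × 𝔇` onto `(ℤ/Nℤ)²`, and consequently the family
`{T_{Āk} e_α : α ∈ 𝔇₀, k ∈ 𝔇}` coincides with the standard orthonormal basis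
`{e_m : m ∈ (ℤ/Nℤ)²}` of `ℓ²(ℤ_N²)`. -/
theorem standard_basis_from_digits (N : ℕ) (hN : 0 < N)
    (A B : Matrix (Fin 2) (Fin 2) ℤ) (hA : A.det ≠ 0)
    (hB : A * B = (N : ℤ) • (1 : Matrix (Fin 2) (Fin 2) ℤ))
    (hq : 2 ≤ A.det.natAbs)
    (D : Finset (Fin 2 → ZMod N)) (hD : IsDigitRep N B D)
    (hinj : Set.InjOn (matBar N A) D) :
    ∃ D₀ : Finset (Fin 2 → ZMod N),
      D₀.card = A.det.natAbs ∧
      Set.BijOn (fun p : (Fin 2 → ZMod N) × (Fin 2 → ZMod N) => p.1 + matBar N A p.2)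
        (↑(D₀ ×ˢ D)) Set.univ ∧
      {f : (Fin 2 → ZMod N) → ℂ | ∃ α ∈ D₀, ∃ k ∈ D, f = transl N (matBar N A k) (stdVec N α)}
        = {f | ∃ m : Fin 2 → ZMod N, f = stdVec N m} := by
  have : NeZero N := ⟨hN.ne'⟩
  obtain ⟨S, hS, -⟩ := (matBarHom N A).range.exists_isComplement_left 0
  have hbij : Set.BijOn
      (fun p : (Fin 2 → ZMod N) × (Fin 2 → ZMod N) => p.1 + matBar N A p.2)
      (↑(S.toFinite.toFinset ×ˢ D)) Set.univ := by
    refine ⟨Set.mapsTo_univ _ _, ?_, ?_⟩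
    · rintro ⟨α, k⟩ hp ⟨β, l⟩ hp' h
      simp only [Finset.coe_product, Set.Finite.coe_toFinset, Set.mem_prod] at hp hp'
      have heq := @hS.1 (⟨α, hp.1⟩, ⟨matBar N A k, k, rfl⟩) (⟨β, hp'.1⟩, ⟨matBar N A l, l, rfl⟩) h
      simp only [Prod.mk.injEq, Subtype.mk.injEq] at heq
      exact Prod.ext heq.1 (hinj hp.2 hp'.2 (congrArg Subtype.val heq.2))
    · intro m _
      obtain ⟨⟨⟨α, hα⟩, ⟨_, v, rfl⟩⟩, rfl⟩ := hS.2 m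
      obtain ⟨d, hd, hdv⟩ := hD.exists_matBar_eq hB v
      exact ⟨(α, d), by simpa using ⟨hα, hd⟩, congrArg (α + ·) hdv⟩
  refine ⟨S.toFinite.toFinset, ?_, hbij, ?_⟩
  · rw [← Set.ncard_eq_toFinset_card, hS.ncard_left, index_range_matBarHom hA hB]
  · ext f
    simp only [transl_stdVec, Set.mem_ofPred_eq]
    constructor
    · rintro ⟨α, -, k, -, rfl⟩
      exact ⟨_, rfl⟩
    · rintro ⟨m, rfl⟩
      obtain ⟨⟨α, k⟩, hp, rfl⟩ := hbij.surjOn (Set.mem_univ m)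
      obtain ⟨hα, hk⟩ := Finset.mem_product.mp (Finset.mem_coe.mp hp)
      exact ⟨α, hα, k, hk, rfl⟩
end

section
/- Let 𝔇 be a digit set for B and 𝔇* a digit set for C. For each k ∈ 𝔇 define E_k : 𝔇* → ℂ by E_k(m) = (1/√|𝔇*|)·e^{2πi⟨m, Ak⟩/N} (with m, k represented by any integer lifts; the value is well defined). Then the family {E_k}_{k ∈ 𝔇} is an orthonormal basis of the complex inner product space of functions 𝔇* → ℂ with inner product ⟨f,g⟩ = Σ_{m∈𝔇*} f(m)·conj(g(m)). -/
/-- The value `e^{2πi⟨m, Ak⟩/N}`, computed with integer lifts of `m` and `k`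
(it is well defined since `A` has integer entries). -/
noncomputable def expChar (N : ℕ) (A : Matrix (Fin 2) (Fin 2) ℤ)
    (m k : Fin 2 → ZMod N) : ℂ :=
  Complex.exp (2 * Real.pi * Complex.I *
    ((∑ i, ((m i).val : ℤ) * A.mulVec (fun j => ((k j).val : ℤ)) i : ℤ) : ℂ) / (N : ℂ))

theorem IsDigitRep.sum_addChar_eq_zero {N : ℕ} {M : Matrix (Fin 2) (Fin 2) ℤ}
    {D : Finset (Fin 2 → ZMod N)} (hD : IsDigitRep N M D) (χ : AddChar (Fin 2 → ZMod N) ℂ)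
    (hχ : ∀ v, χ (matBar N M v) = 1) (u : Fin 2 → ZMod N) (hu : χ u ≠ 1) :
    ∑ d ∈ D, χ d = 0 := by
  have hsub : ∀ a b, matBar N M a - matBar N M b = matBar N M (a - b) := fun a b =>
    (Matrix.mulVec_sub _ a b).symm
  choose r hr huniq using hD.2
  have hfix : ∀ d ∈ D, ∀ v w, v - (d + w) ∈ Set.range (matBar N M) → r (v - w) = d := by
    intro d hd v w hv
    refine (huniq (v - w) d ⟨hd, ?_⟩).symm
    simpa only [sub_sub, add_comm w d] using hv
  have hinv : ∀ w, ∀ d ∈ D, r (r (d + w) - w) = d := by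
    intro w d hd
    apply hfix d hd
    obtain ⟨a, ha⟩ := (hr (d + w)).2
    refine ⟨0 - a, ?_⟩
    rw [← hsub, ha, matBar, Matrix.mulVec_zero]
    abel
  have hval : ∀ v, χ (r v) = χ v := by
    intro v
    obtain ⟨a, ha⟩ := (hr v).2
    have hv : v = matBar N M a + r v := by rw [ha]; abel
    conv_rhs => rw [hv, AddChar.map_add_eq_mul, hχ, one_mul]
  have key : ∑ d ∈ D, χ d * χ u = ∑ d ∈ D, χ d := by
    refine Finset.sum_nbij' (fun d => r (d + u)) (fun d => r (d - u))
      (fun d _ => (hr _).1) (fun d _ => (hr _).1) (fun d hd => hinv u d hd) (fun d hd => ?_)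
      (fun d _ => by rw [hval, AddChar.map_add_eq_mul])
    simpa only [sub_neg_eq_add, ← sub_eq_add_neg] using hinv (-u) d hd
  rw [← Finset.sum_mul] at key
  by_contra h0
  exact hu ((mul_eq_left₀ h0).mp key)

theorem matBar_matBar_eq_zero_s10 {N : ℕ} {P Q : Matrix (Fin 2) (Fin 2) ℤ}
    (h : P * Q = (N : ℤ) • (1 : Matrix (Fin 2) (Fin 2) ℤ)) (v : Fin 2 → ZMod N) :
    matBar N P (matBar N Q v) = 0 := by
  have hmap : P.map (Int.cast : ℤ → ZMod N) * Q.map (Int.cast : ℤ → ZMod N) = 0 := by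
    have := Matrix.map_mul (L := P) (M := Q) (f := Int.castRingHom (ZMod N))
    rw [h] at this
    refine this.symm.trans ?_
    ext i j
    rw [Matrix.map_apply, Matrix.smul_apply, smul_eq_mul, map_mul, map_natCast,
      ZMod.natCast_self, zero_mul, Matrix.zero_apply]
  rw [matBar, matBar, Matrix.mulVec_mulVec, hmap, Matrix.zero_mulVec]

theorem matBar_dotProduct {N : ℕ} (M : Matrix (Fin 2) (Fin 2) ℤ) (u v : Fin 2 → ZMod N) :
    matBar N M u ⬝ᵥ v = u ⬝ᵥ matBar N M.transpose v := by
  rw [matBar, matBar, Matrix.transpose_map, Matrix.mulVec_transpose, dotProduct_comm,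
    Matrix.dotProduct_mulVec, dotProduct_comm]

theorem mem_range_matBar_of_matBar_eq_zero {N : ℕ} (hN : 0 < N) {P Q : Matrix (Fin 2) (Fin 2) ℤ}
    (h : P * Q = (N : ℤ) • (1 : Matrix (Fin 2) (Fin 2) ℤ)) {v : Fin 2 → ZMod N}
    (hv : matBar N Q v = 0) : v ∈ Set.range (matBar N P) := by
  obtain ⟨x, rfl⟩ : ∃ x : Fin 2 → ℤ, (fun i => (x i : ZMod N)) = v :=
    ⟨fun i => (ZMod.intCast_surjective (v i)).choose,
      funext fun i => (ZMod.intCast_surjective (v i)).choose_spec⟩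
  have hdvd : ∀ i, (N : ℤ) ∣ Q.mulVec x i := by
    intro i
    rw [← ZMod.intCast_zmod_eq_zero_iff_dvd]
    simpa [matBar, Matrix.mulVec, dotProduct] using congrFun hv i
  choose w hw using hdvd
  have hx : x = P.mulVec w := by
    have h1 : P.mulVec (Q.mulVec x) = (N : ℤ) • x := by
      rw [Matrix.mulVec_mulVec, h, Matrix.smul_mulVec, Matrix.one_mulVec]
    have h2 : Q.mulVec x = (N : ℤ) • w := funext hw
    rw [h2, Matrix.mulVec_smul] at h1
    exact (smul_right_injective _ (by exact_mod_cast hN.ne' : (N : ℤ) ≠ 0) h1).symm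
  refine ⟨fun i => (w i : ZMod N), ?_⟩
  funext i
  rw [hx]
  simp [matBar, Matrix.mulVec, dotProduct]

theorem IsDigitRep.sum_stdAddChar_eq_zero {N : ℕ} [NeZero N] {P Q : Matrix (Fin 2) (Fin 2) ℤ}
    (h : P * Q = (N : ℤ) • (1 : Matrix (Fin 2) (Fin 2) ℤ)) {D : Finset (Fin 2 → ZMod N)}
    (hD : IsDigitRep N P.transpose D) {x : Fin 2 → ZMod N} (hx : matBar N Q x ≠ 0) :
    ∑ d ∈ D, ZMod.stdAddChar (d ⬝ᵥ matBar N Q x) = 0 := by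
  let φ : (Fin 2 → ZMod N) →+ ZMod N :=
    AddMonoidHom.mk' (fun d => d ⬝ᵥ matBar N Q x) fun a b => add_dotProduct a b _
  obtain ⟨i, hi⟩ := Function.ne_iff.mp hx
  refine hD.sum_addChar_eq_zero (ZMod.stdAddChar.compAddMonoidHom φ) (fun v => ?_)
    (Pi.single i 1) ?_
  · change ZMod.stdAddChar (matBar N P.transpose v ⬝ᵥ matBar N Q x) = 1
    rw [matBar_dotProduct, Matrix.transpose_transpose, matBar_matBar_eq_zero_s10 h,
      dotProduct_zero, AddChar.map_zero_eq_one]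
  · change ZMod.stdAddChar (Pi.single i 1 ⬝ᵥ matBar N Q x) ≠ 1
    rw [single_one_dotProduct, ← AddChar.map_zero_eq_one (ZMod.stdAddChar (N := N))]
    exact fun he => hi (ZMod.injective_stdAddChar he)

theorem IsDigitRep.eq_of_matBar_eq {N : ℕ} (hN : 0 < N) {P Q : Matrix (Fin 2) (Fin 2) ℤ}
    (h : P * Q = (N : ℤ) • (1 : Matrix (Fin 2) (Fin 2) ℤ)) {D : Finset (Fin 2 → ZMod N)}
    (hD : IsDigitRep N P D) {a b : Fin 2 → ZMod N} (ha : a ∈ D) (hb : b ∈ D)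
    (hab : matBar N Q (a - b) = 0) : a = b :=
  (hD.2 a).unique ⟨ha, 0, by simp [matBar]⟩ ⟨hb, mem_range_matBar_of_matBar_eq_zero hN h hab⟩

theorem expChar_eq_stdAddChar {N : ℕ} [NeZero N] (A : Matrix (Fin 2) (Fin 2) ℤ)
    (m k : Fin 2 → ZMod N) :
    expChar N A m k = ZMod.stdAddChar (m ⬝ᵥ matBar N A k) := by
  rw [expChar, ← ZMod.stdAddChar_coe]
  congr 1
  simp [matBar, Matrix.mulVec, dotProduct]

theorem stdAddChar_mul_conj {N : ℕ} [NeZero N] (a b : ZMod N) :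
    ZMod.stdAddChar a * (starRingEnd ℂ) (ZMod.stdAddChar b) = ZMod.stdAddChar (a - b) := by
  rw [← AddChar.map_neg_eq_conj, ← AddChar.map_add_eq_mul, sub_eq_add_neg]

theorem mul_comm_of_mul_eq_smul_one {A B : Matrix (Fin 2) (Fin 2) ℤ} {n : ℤ} (hA : A.det ≠ 0)
    (h : A * B = n • (1 : Matrix (Fin 2) (Fin 2) ℤ)) :
    B * A = n • (1 : Matrix (Fin 2) (Fin 2) ℤ) := by
  refine smul_right_injective _ hA ?_
  change A.det • (B * A) = A.det • (n • (1 : Matrix (Fin 2) (Fin 2) ℤ))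
  calc A.det • (B * A) = A.adjugate * (A * B) * A := by
        rw [← Matrix.mul_assoc, Matrix.adjugate_mul, Matrix.smul_mul, Matrix.smul_mul,
          Matrix.one_mul]
    _ = A.det • (n • (1 : Matrix (Fin 2) (Fin 2) ℤ)) := by
        rw [h, Matrix.mul_smul, Matrix.mul_one, Matrix.smul_mul, Matrix.adjugate_mul, smul_comm]

/-- Let `𝔇` be a digit set for `B` and `𝔇*` a digit set for `C = Bᵀ`.  For
`k ∈ 𝔇`, define `E_k : 𝔇* → ℂ` by `E_k(m) = (1/√|𝔇*|)·e^{2πi⟨m, Ak⟩/N}`.  Then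
`{E_k}_{k ∈ 𝔇}` is an orthonormal basis of the space of functions `𝔇* → ℂ`
with inner product `⟨f, g⟩ = Σ_{m ∈ 𝔇*} f(m)·conj(g(m))`: the family is
orthonormal and spans the whole space. -/
theorem exp_family_onb (N : ℕ) (hN : 0 < N) (A B : Matrix (Fin 2) (Fin 2) ℤ)
    (hA : A.det ≠ 0) (hB : A * B = (N : ℤ) • (1 : Matrix (Fin 2) (Fin 2) ℤ))
    (D : Finset (Fin 2 → ZMod N)) (hD : IsDigitRep N B D)
    (hinj : Set.InjOn (matBar N A) D)
    (Dstar : Finset (Fin 2 → ZMod N)) (hDstar : IsDigitRep N B.transpose Dstar)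
    (E : ↥D → (↥Dstar → ℂ))
    (hE : ∀ (k : ↥D) (m : ↥Dstar),
      E k m = (1 / Real.sqrt Dstar.card : ℂ) * expChar N A (↑m) (↑k)) :
    (∀ k₁ k₂ : ↥D, ∑ m : ↥Dstar, E k₁ m * (starRingEnd ℂ) (E k₂ m) =
        if k₁ = k₂ then 1 else 0) ∧
    Submodule.span ℂ (Set.range E) = ⊤ := by
  have : NeZero N := ⟨hN.ne'⟩
  have hBA := mul_comm_of_mul_eq_smul_one hA hB
  have hABt : B.transpose * A.transpose = (N : ℤ) • (1 : Matrix (Fin 2) (Fin 2) ℤ) := by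
    rw [← Matrix.transpose_mul, hB, Matrix.transpose_smul, Matrix.transpose_one]
  have hsubA : ∀ (M : Matrix (Fin 2) (Fin 2) ℤ) (a b : Fin 2 → ZMod N),
      matBar N M a - matBar N M b = matBar N M (a - b) := fun M a b =>
    (Matrix.mulVec_sub _ a b).symm
  have hcard : (Dstar.card : ℂ) ≠ 0 :=
    Nat.cast_ne_zero.mpr (Finset.card_ne_zero_of_mem hDstar.1)
  have hsqrt : ((Real.sqrt Dstar.card : ℝ) : ℂ) * (Real.sqrt Dstar.card : ℝ) = Dstar.card := by
    rw [← Complex.ofReal_mul, Real.mul_self_sqrt (Nat.cast_nonneg _), Complex.ofReal_natCast]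
  have hsqrt0 : ((Real.sqrt Dstar.card : ℝ) : ℂ) ≠ 0 := fun h0 => hcard (by
    rw [← hsqrt, h0, zero_mul])
  constructor
  · intro k₁ k₂
    have hterm : ∀ m : ↥Dstar, E k₁ m * (starRingEnd ℂ) (E k₂ m) =
        (Dstar.card : ℂ)⁻¹ * ZMod.stdAddChar ((m : Fin 2 → ZMod N) ⬝ᵥ
          matBar N A ((k₁ : Fin 2 → ZMod N) - k₂)) := by
      intro m
      rw [hE, hE, expChar_eq_stdAddChar, expChar_eq_stdAddChar, ← hsubA, dotProduct_sub,
        ← stdAddChar_mul_conj, map_mul, map_div₀, map_one, Complex.conj_ofReal, ← hsqrt]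
      field_simp
    rw [Finset.sum_congr rfl fun m _ => hterm m, ← Finset.mul_sum,
      Finset.sum_coe_sort Dstar fun m => ZMod.stdAddChar (m ⬝ᵥ
        matBar N A ((k₁ : Fin 2 → ZMod N) - k₂))]
    split_ifs with hk
    · subst hk
      simp [matBar, hcard]
    · rw [hDstar.sum_stdAddChar_eq_zero hBA, mul_zero]
      intro h0
      exact hk (Subtype.ext (hinj k₁.2 k₂.2 (sub_eq_zero.mp ((hsubA A _ _).trans h0))))
  · have hcardD : (D.card : ℂ) ≠ 0 :=
      Nat.cast_ne_zero.mpr (Finset.card_ne_zero_of_mem hD.1)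
    have hdelta : ∀ m₀ : ↥Dstar,
        (Pi.single m₀ 1 : ↥Dstar → ℂ) ∈ Submodule.span ℂ (Set.range E) := by
      intro m₀
      have hexp : (Pi.single m₀ 1 : ↥Dstar → ℂ) = ∑ k : ↥D,
          ((D.card : ℂ)⁻¹ * (Real.sqrt Dstar.card : ℝ) *
            (starRingEnd ℂ) (expChar N A m₀ k)) • E k := by
        funext m
        have hterm : ∀ k : ↥D, (D.card : ℂ)⁻¹ * (Real.sqrt Dstar.card : ℝ) *
            (starRingEnd ℂ) (expChar N A m₀ k) * E k m = (D.card : ℂ)⁻¹ *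
              ZMod.stdAddChar ((k : Fin 2 → ZMod N) ⬝ᵥ
                matBar N A.transpose ((m : Fin 2 → ZMod N) - m₀)) := by
          intro k
          rw [hE, ← matBar_dotProduct, dotProduct_comm, sub_dotProduct, ← stdAddChar_mul_conj,
            expChar_eq_stdAddChar, expChar_eq_stdAddChar]
          field_simp
        rw [Finset.sum_apply]
        simp only [Pi.smul_apply, smul_eq_mul]
        rw [Finset.sum_congr rfl fun k _ => hterm k, ← Finset.mul_sum,
          Finset.sum_coe_sort D fun k => ZMod.stdAddChar (k ⬝ᵥ
            matBar N A.transpose ((m : Fin 2 → ZMod N) - m₀))]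
        by_cases hm : m = m₀
        · subst hm
          simp [matBar, hcardD]
        · rw [Pi.single_eq_of_ne hm, IsDigitRep.sum_stdAddChar_eq_zero hABt
            (by rwa [Matrix.transpose_transpose]), mul_zero]
          exact fun h0 => hm (Subtype.ext (hDstar.eq_of_matBar_eq hN hABt m.2 m₀.2 h0))
      rw [hexp]
      exact Submodule.sum_mem _ fun k _ =>
        Submodule.smul_mem _ _ (Submodule.subset_span (Set.mem_range_self k))
    refine eq_top_iff.mpr fun f _ => ?_
    rw [pi_eq_sum_univ' f]
    exact Submodule.sum_mem _ fun m _ => Submodule.smul_mem _ _ (hdelta m)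
end
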